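/- Let n ≥ 2 and let a₁,...,aₙ be positive integers with gcd(a₁,...,aₙ) = 1, and let M = lcm(a₁,...,aₙ). Let b be a nonnegative integer, let r be the remainder of b modulo M, and assume ⌊n − (∑_{i=1}^n aᵢ + r)/M⌋ = 0. Then P(r) = M^{n−1}/(a₁a₂⋯aₙ) and P(b) = (M^{n−1}/(a₁a₂⋯aₙ)) · C(⌊b/M⌋ + n − 1, n − 1). -/

import Mathlib

/-!
Put `mᵢ = M / aᵢ` and write each coordinate as `xᵢ = mᵢ qᵢ + zᵢ` with `0 ≤ zᵢ < mᵢ`. Then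
`∑ aᵢ xᵢ = M ∑ qᵢ + ∑ aᵢ zᵢ`. If the total is congruent to `r` modulo `M`, so is `∑ aᵢ zᵢ`; moreover
`∑ aᵢ zᵢ ≤ n M - ∑ aᵢ < r + M`, the last inequality being the hypothesis that the floor is `0`.
As `r < M`, this forces `∑ aᵢ zᵢ = r` exactly (`sum_val_eq`). Hence solutions of `∑ aᵢ xᵢ = b`
correspond to pairs `(q, z)` with `∑ qᵢ = ⌊b / M⌋` and `∑ aᵢ zᵢ ≡ r (mod M)` (`solutionsEquiv`).

The number of such `q` is `C(⌊b / M⌋ + n - 1, n - 1)`. The admissible `z` form a fibre of the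
homomorphism `∏ ℤ/mᵢ → ℤ/M`, `z ↦ ∑ aᵢ zᵢ` (`weightHom`), which is surjective because the `aᵢ` have
gcd `1`; so there are `(∏ mᵢ) / M = M ^ (n - 1) / ∏ aᵢ` of them. The value of `P(r)` is the case
`b = r`.
-/

/-- The homomorphism `∏ ℤ/mᵢ → ℤ/M`, `z ↦ ∑ aᵢ zᵢ`, which is well defined since `aᵢ mᵢ = M`. -/
noncomputable def weightHom {n : ℕ} (a m : Fin n → ℕ) (M : ℕ) (h : ∀ i, a i * m i = M) :
    (∀ i, ZMod (m i)) →+ ZMod M :=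
  ∑ i, (ZMod.lift (m i) ⟨zmultiplesHom (ZMod M) (a i : ZMod M), by
    have := congrArg (Nat.cast : ℕ → ZMod M) (h i)
    push_cast at this
    simpa [mul_comm] using this⟩).comp (Pi.evalAddMonoidHom (fun i => ZMod (m i)) i)

lemma weightHom_natCast {n : ℕ} (a m : Fin n → ℕ) (M : ℕ) (h : ∀ i, a i * m i = M)
    (x : Fin n → ℕ) :
    weightHom a m M h (fun i => (x i : ZMod (m i))) = ((∑ i, a i * x i : ℕ) : ZMod M) := by
  unfold weightHom
  rw [AddMonoidHom.finsetSum_apply]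
  push_cast
  refine Finset.sum_congr rfl fun i _ => ?_
  have := ZMod.lift_coe (m i) (A := ZMod M) ⟨zmultiplesHom (ZMod M) (a i : ZMod M), by
    have := congrArg (Nat.cast : ℕ → ZMod M) (h i)
    push_cast at this
    simpa [mul_comm] using this⟩ (x i)
  simp only [Int.cast_natCast] at this
  simp [this, mul_comm]

/-- The integers whose residue lies in the range form a subgroup `dℤ`, and `d` divides every
`aᵢ`, hence divides their gcd `1`. -/
lemma weightHom_surjective {n : ℕ} (a m : Fin n → ℕ) (M : ℕ) (h : ∀ i, a i * m i = M)
    (hgcd : Finset.univ.gcd a = 1) : Function.Surjective (weightHom a m M h) := by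
  obtain ⟨d, hd⟩ := Int.subgroup_cyclic
    ((weightHom a m M h).range.comap (Int.castAddHom (ZMod M)))
  rw [← AddSubgroup.zmultiples_eq_closure] at hd
  have hdvd : ∀ i, d ∣ (a i : ℤ) := by
    intro i
    rw [← Int.mem_zmultiples_iff, ← hd]
    refine ⟨fun j => ((Pi.single i 1 : Fin n → ℕ) j : ZMod (m j)), ?_⟩
    rw [weightHom_natCast]
    simp [Pi.single_apply]
  have h1 : d.natAbs ∣ 1 := by
    rw [← hgcd]
    exact Finset.dvd_gcd fun i _ => Int.natCast_dvd_natCast.1 (by simpa using hdvd i)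
  intro y
  obtain ⟨k, rfl⟩ := ZMod.intCast_surjective y
  have hk : k ∈ AddSubgroup.zmultiples d := by
    rw [Int.mem_zmultiples_iff]
    exact (isUnit_iff_dvd_one.2 (Int.natAbs_dvd_natAbs.1 (by simpa using h1))).dvd
  rw [← hd] at hk
  exact hk

lemma card_fiber_mul {A B : Type*} [AddGroup A] [AddGroup B] [Finite A] [Finite B]
    (f : A →+ B) (hf : Function.Surjective f) (y : B) :
    Nat.card {x // f x = y} * Nat.card B = Nat.card A := by
  classical
  have := Fintype.ofFinite A
  have := Fintype.ofFinite B
  simp only [Nat.card_eq_fintype_card, Fintype.card_subtype]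
  rw [← Finset.card_univ (α := A),
    Finset.card_eq_sum_card_fiberwise (s := Finset.univ) (f := f) (t := Finset.univ)
      (by simp),
    Finset.sum_congr rfl fun z _ => AddMonoidHom.card_fiber_eq_of_mem_range f (hf z) (hf y)]
  simp [mul_comm]

/-- A box element whose weighted sum is `r` modulo `M` has weighted sum exactly `r`: the sum is at
most `n M - ∑ aᵢ < r + M`. -/
lemma sum_val_eq {n : ℕ} (a m : Fin n → ℕ) (M : ℕ) (h : ∀ i, a i * m i = M) (hM : 0 < M)
    (r : ℕ) (hr : r < M) (hs : n * M < ∑ i, a i + r + M)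
    (x : Fin n → ℕ) (hx : ∀ i, x i < m i)
    (hmod : ((∑ i, a i * x i : ℕ) : ZMod M) = r) : ∑ i, a i * x i = r := by
  have hle : ∑ i, a i * x i + ∑ i, a i ≤ n * M := by
    rw [← Finset.sum_add_distrib]
    calc _ ≤ ∑ i : Fin n, M := Finset.sum_le_sum fun i _ => by
            rw [← h i, ← Nat.mul_succ]
            exact Nat.mul_le_mul_left _ (hx i)
      _ = _ := by simp
  rw [ZMod.natCast_eq_natCast_iff', Nat.mod_eq_of_lt hr] at hmod
  have hdiv := Nat.div_add_mod (∑ i, a i * x i) M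
  rw [hmod] at hdiv
  have h0 : (∑ i, a i * x i) / M = 0 := by
    rw [Nat.div_eq_zero_iff]
    right
    by_contra hc
    have : 1 ≤ (∑ i, a i * x i) / M := Nat.div_pos (by omega) hM
    nlinarith
  rw [h0] at hdiv
  omega

lemma sum_split {n : ℕ} (a m : Fin n → ℕ) (M : ℕ) (h : ∀ i, a i * m i = M) (q z : Fin n → ℕ) :
    ∑ i, a i * (m i * q i + z i) = M * ∑ i, q i + ∑ i, a i * z i := by
  rw [Finset.mul_sum, ← Finset.sum_add_distrib]
  refine Finset.sum_congr rfl fun i _ => ?_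
  rw [← h i]
  ring

/-- Coordinatewise division with remainder by `mᵢ`, restricted to the solutions of
`∑ aᵢ xᵢ = b`. -/
noncomputable def solutionsEquiv {n : ℕ} (a m : Fin n → ℕ) (M : ℕ) (h : ∀ i, a i * m i = M)
    (hM : 0 < M) (b : ℕ) (hs : n * M < ∑ i, a i + b % M + M) :
    {x : Fin n → ℕ // ∑ i, a i * x i = b} ≃
      {q : Fin n → ℕ // ∑ i, q i = b / M} ×
        {z : ∀ i, ZMod (m i) // weightHom a m M h z = ((b % M : ℕ) : ZMod M)} :=
  have hm : ∀ i, 0 < m i := fun i => Nat.pos_of_ne_zero fun h0 => by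
    have := h i
    simp [h0] at this
    omega
  have hne : ∀ i, NeZero (m i) := fun i => ⟨(hm i).ne'⟩
  { toFun := fun x => (⟨fun i => x.1 i / m i, by
        have hx := sum_split a m M h (fun i => x.1 i / m i) (fun i => x.1 i % m i)
        simp only [Nat.div_add_mod, x.2] at hx
        have hz := sum_val_eq a m M h hM (b % M) (Nat.mod_lt _ hM) hs (fun i => x.1 i % m i)
          (fun i => Nat.mod_lt _ (hm i)) (by
            have := congrArg (Nat.cast : ℕ → ZMod M) hx
            push_cast at this
            simpa using this.symm)
        have hb := Nat.div_add_mod b M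
        rw [hz] at hx
        beta_reduce at hz ⊢
        exact Nat.eq_of_mul_eq_mul_left hM (by omega)⟩,
      ⟨fun i => (x.1 i : ZMod (m i)), by
        rw [weightHom_natCast, x.2, ZMod.natCast_mod]⟩)
    invFun := fun p => ⟨fun i => m i * p.1.1 i + (p.2.1 i).val, by
        have hz := sum_val_eq a m M h hM (b % M) (Nat.mod_lt _ hM) hs (fun i => (p.2.1 i).val)
          (fun i => ZMod.val_lt _) (by
            rw [← weightHom_natCast a m M h]
            simpa using p.2.2)
        rw [sum_split a m M h, hz, p.1.2, Nat.div_add_mod]⟩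
    left_inv := fun x => by
      ext i
      simp [ZMod.val_natCast, Nat.div_add_mod]
    right_inv := fun p => by
      refine Prod.ext (Subtype.ext (funext fun i => ?_)) (Subtype.ext (funext fun i => ?_))
      · have := ZMod.val_lt (p.2.1 i)
        simp [Nat.mul_add_div (hm i), Nat.div_eq_of_lt this]
      · simp }

lemma card_sum_eq (n k : ℕ) (hn : 0 < n) :
    Nat.card {q : Fin n → ℕ // ∑ i, q i = k} = (k + n - 1).choose (n - 1) := by
  classical
  rw [← Nat.card_congr (Sym.equivNatSumOfFintype (Fin n) k), Nat.card_eq_fintype_card,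
    Sym.card_sym_eq_choose, Fintype.card_fin, Nat.add_comm n k]
  exact Nat.choose_symm_of_eq_add (by omega)

/-- The count of solutions for a right-hand side `b` whose remainder modulo `M` satisfies the
size condition. -/
lemma card_solutions {n : ℕ} (hn : 0 < n) (a : Fin n → ℕ) (ha : ∀ i, 0 < a i)
    (hgcd : Finset.univ.gcd a = 1) (M : ℕ) (hM : M = Finset.univ.lcm a) (b : ℕ)
    (hs : n * M < ∑ i, a i + b % M + M) :
    (Nat.card {x : Fin n → ℕ // ∑ i, (a i : ℤ) * x i = (b : ℤ)} : ℚ) =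
      ((M : ℚ) ^ (n - 1) / ∏ i, (a i : ℚ)) * ((b / M + n - 1).choose (n - 1) : ℚ) := by
  have hM0 : 0 < M := by
    refine Nat.pos_of_ne_zero fun h0 => ?_
    rw [hM, Finset.lcm_eq_zero_iff] at h0
    obtain ⟨i, -, hi⟩ := h0
    exact (ha i).ne' hi
  have h : ∀ i, a i * (M / a i) = M := fun i =>
    Nat.mul_div_cancel' (hM ▸ Finset.dvd_lcm (Finset.mem_univ i))
  have hne : ∀ i, NeZero (M / a i) := fun i => ⟨fun h0 => by
    have := h i
    simp only [h0] at this
    omega⟩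
  have : NeZero M := ⟨hM0.ne'⟩
  have hcast : Nat.card {x : Fin n → ℕ // ∑ i, (a i : ℤ) * x i = (b : ℤ)} =
      Nat.card {x : Fin n → ℕ // ∑ i, a i * x i = b} :=
    Nat.card_congr (Equiv.subtypeEquivRight fun x => by norm_cast)
  have hfib := card_fiber_mul (weightHom a (fun i => M / a i) M h)
    (weightHom_surjective a _ M h hgcd) ((b % M : ℕ) : ZMod M)
  rw [Nat.card_zmod, Nat.card_pi] at hfib
  simp only [Nat.card_zmod] at hfib
  rw [hcast, Nat.card_congr (solutionsEquiv a _ M h hM0 b hs), Nat.card_prod,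
    card_sum_eq n _ hn, Nat.cast_mul, mul_comm]
  congr 1
  have hprod : (∏ i, a i) * ∏ i, M / a i = M ^ n := by
    rw [← Finset.prod_mul_distrib, Finset.prod_congr rfl fun i _ => h i]
    simp
  have hpa : (∏ i, (a i : ℚ)) ≠ 0 :=
    Finset.prod_ne_zero_iff.2 fun i _ => by exact_mod_cast (ha i).ne'
  rw [eq_div_iff hpa]
  have hMq : (M : ℚ) ≠ 0 := by exact_mod_cast hM0.ne'
  apply mul_right_cancel₀ hMq
  rw [← pow_succ, Nat.sub_add_cancel hn]
  rw [← hfib] at hprod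
  have := congrArg (Nat.cast : ℕ → ℚ) hprod
  push_cast at this
  rw [← this]
  ring


/-- Theorem 3.3: if `gcd(a₁,…,aₙ) = 1`, `M = lcm(a₁,…,aₙ)`, `r = b mod M`
and `⌊n − (∑aᵢ + r)/M⌋ = 0`, then `P(r) = M^{n−1}/(a₁⋯aₙ)` and
`P(b) = (M^{n−1}/(a₁⋯aₙ)) · C(⌊b/M⌋ + n − 1, n − 1)`. -/
theorem stmt_9 (n : ℕ) (hn : 2 ≤ n) (a : Fin n → ℕ)
    (ha : ∀ i, 0 < a i) (hgcd : Finset.univ.gcd a = 1)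
    (M : ℕ) (hM : M = Finset.univ.lcm a)
    (b : ℕ) (r : ℕ) (hr : r = b % M)
    (P : ℤ → ℕ)
    (hP : ∀ e : ℤ, P e = Nat.card {x : Fin n → ℕ // ∑ i, (a i : ℤ) * x i = e})
    (hs : ⌊(n : ℚ) - ((∑ i, (a i : ℚ)) + r) / M⌋ = 0) :
    (P (r : ℤ) : ℚ) = (M : ℚ) ^ (n - 1) / ∏ i, (a i : ℚ) ∧
    (P (b : ℤ) : ℚ) =
      ((M : ℚ) ^ (n - 1) / ∏ i, (a i : ℚ)) * ((b / M + n - 1).choose (n - 1) : ℚ) := by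
  have hM0 : 0 < M := by
    refine Nat.pos_of_ne_zero fun h0 => ?_
    rw [hM, Finset.lcm_eq_zero_iff] at h0
    obtain ⟨i, -, hi⟩ := h0
    exact (ha i).ne' hi
  have hMq : (0 : ℚ) < M := by exact_mod_cast hM0
  have hs' : n * M < ∑ i, a i + r + M := by
    have h1 := (Int.floor_eq_zero_iff.1 hs).2
    have h2 : (n : ℚ) - 1 < ((∑ i, (a i : ℚ)) + r) / M := by linarith
    rw [lt_div_iff₀ hMq] at h2
    have h3 : (n : ℚ) * M < (∑ i, (a i : ℚ)) + r + M := by linarith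
    exact_mod_cast h3
  have hrM : r < M := hr ▸ Nat.mod_lt _ hM0
  constructor
  · rw [hP, card_solutions (by omega) a ha hgcd M hM r (by rwa [Nat.mod_eq_of_lt hrM]),
      Nat.div_eq_of_lt hrM]
    simp
  · rw [hP, card_solutions (by omega) a ha hgcd M hM b (by rwa [← hr])]
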